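/- arXiv:1304.3302 — 2 statements merged into one kernel-verified Lean document; each statement's English description precedes it below -/
import Mathlib

section
/- Let μ₁, μ₂, ρ₁, ρ₂ > 0. There exists an angle φ ∈ [0, π/2) such that for every z ∈ ℂ with Re z ≥ 0 one has ψ(z) ≠ 0 and |arg ψ(z)| ≤ φ; i.e., ψ maps the closed right half-plane into a closed sector strictly inside the open right half-plane. -/
open Complex

/-- `ω(z) = (1 + ρ z/μ)^{1/2}`, principal branch. -/
noncomputable def omegaSym (μ ρ : ℝ) (z : ℂ) : ℂ :=
  (1 + (ρ : ℂ) * z / (μ : ℂ)) ^ ((1 : ℂ)/2)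

/-- The function `ψ` from the Lopatinskii analysis. -/
noncomputable def psiSym (μ₁ μ₂ ρ₁ ρ₂ : ℝ) (z : ℂ) : ℂ :=
  (μ₂ : ℂ) * ((omegaSym μ₁ ρ₁ z + 1)/(omegaSym μ₁ ρ₁ z ^ 2 + 1)) *
      ((omegaSym μ₂ ρ₂ z - 1)/omegaSym μ₂ ρ₂ z
        + 2 * (omegaSym μ₂ ρ₂ z + 1)/(omegaSym μ₂ ρ₂ z ^ 2 + 1))
  + (μ₁ : ℂ) * ((omegaSym μ₂ ρ₂ z + 1)/(omegaSym μ₂ ρ₂ z ^ 2 + 1)) *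
      ((omegaSym μ₁ ρ₁ z - 1)/omegaSym μ₁ ρ₁ z
        + 2 * (omegaSym μ₁ ρ₁ z + 1)/(omegaSym μ₁ ρ₁ z ^ 2 + 1))


/-- `w` lies in the open-right cone of slope `K`. -/
def InCone (K : ℝ) (w : ℂ) : Prop := 0 < w.re ∧ |w.im| ≤ K * w.re

lemma inCone_div (K : ℝ) (x y : ℂ) (hp : 0 < x.re * y.re + x.im * y.im)
    (h1 : x.im * y.re - x.re * y.im ≤ K * (x.re * y.re + x.im * y.im))
    (h2 : -(x.im * y.re - x.re * y.im) ≤ K * (x.re * y.re + x.im * y.im)) :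
    InCone K (x / y) := by
  have hy : y ≠ 0 := by
    rintro rfl
    simp at hp
  have hn : 0 < Complex.normSq y := Complex.normSq_pos.mpr hy
  have hre : (x / y).re = (x.re * y.re + x.im * y.im) / Complex.normSq y := by
    rw [Complex.div_re]; ring
  have him : (x / y).im = (x.im * y.re - x.re * y.im) / Complex.normSq y := by
    rw [Complex.div_im]; ring
  refine ⟨by rw [hre]; positivity, ?_⟩
  rw [hre, him, abs_div, abs_of_pos hn, ← mul_div_assoc]
  gcongr
  exact abs_le.mpr ⟨by linarith, h1⟩

lemma inCone_A (w : ℂ) (ha : 1 ≤ w.re) (hu : 1 ≤ w.re ^ 2 - w.im ^ 2) :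
    InCone (3/2) ((w + 1) / (w ^ 2 + 1)) := by
  obtain ⟨a, b⟩ := w
  simp only at ha hu
  have hb : |b| ≤ a := abs_le_of_sq_le_sq (by linarith) (by linarith)
  obtain ⟨hb1, hb2⟩ := abs_le.mp hb
  have key : ∀ b : ℝ, b ≤ a → -a ≤ b → 1 ≤ a ^ 2 - b ^ 2 →
      2 * (2 * a * b * (a + 1) - b * (a ^ 2 - b ^ 2 + 1)) ≤
        3 * ((a + 1) * (a ^ 2 - b ^ 2 + 1) + b * (2 * a * b)) := by
    intro b h1 h2 h3
    have e1 : 0 ≤ (a ^ 2 + b ^ 2) * (a - b) := by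
      apply mul_nonneg <;> nlinarith
    nlinarith [mul_nonneg (by linarith : 0 ≤ a - 1) (sq_nonneg (a - b)), sq_nonneg (a - b),
      mul_nonneg (by linarith : 0 ≤ a) (sq_nonneg (a - 2 * b)),
      mul_nonneg (by linarith : 0 ≤ a) (sq_nonneg b), sq_nonneg (a - 2 * b), sq_nonneg (b - 1)]
  have k1 := key b hb2 hb1 hu
  have k2 := key (-b) (by linarith) (by linarith) (by nlinarith)
  apply inCone_div <;> simp [pow_two]
  · have : 0 < (a + 1) * (a * a - b * b + 1) := by apply mul_pos <;> nlinarith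
    nlinarith [mul_nonneg (by linarith : 0 ≤ a) (sq_nonneg b)]
  · nlinarith
  · nlinarith

lemma inCone_B (w : ℂ) (ha : 1 ≤ w.re) (hu : 1 ≤ w.re ^ 2 - w.im ^ 2) :
    InCone (1/2) ((w - 1) / w + 2 * (w + 1) / (w ^ 2 + 1)) := by
  have hw : w ≠ 0 := by
    rintro rfl
    simp at ha
    linarith
  have hw2 : w ^ 2 + 1 ≠ 0 := by
    intro h
    have := congrArg Complex.re h
    simp [pow_two] at this
    nlinarith
  have e : (w - 1) / w + 2 * (w + 1) / (w ^ 2 + 1)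
      = (w ^ 3 + w ^ 2 + 3 * w - 1) / (w ^ 3 + w) := by
    have : w ^ 3 + w ≠ 0 := by
      have : w ^ 3 + w = w * (w ^ 2 + 1) := by ring
      rw [this]; exact mul_ne_zero hw hw2
    field_simp
    ring
  rw [e]
  clear e hw hw2
  obtain ⟨a, b⟩ := w
  simp only at ha hu
  have hb : |b| ≤ a := abs_le_of_sq_le_sq (by linarith) (by linarith)
  obtain ⟨hb1, hb2⟩ := abs_le.mp hb
  obtain ⟨r, hr⟩ : ∃ r, r = a ^ 2 + b ^ 2 := ⟨_, rfl⟩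
  obtain ⟨u, hu'⟩ : ∃ u, u = a ^ 2 - b ^ 2 := ⟨_, rfl⟩
  rw [← hu'] at hu
  have hru : u ≤ r := by nlinarith [sq_nonneg b]
  have har : a ≤ r := by nlinarith [sq_nonneg b]
  have pos : 0 < r ^ 3 + r ^ 2 * a + 4 * r * u + 3 * r + 2 * r * a - 2 * a * u - a := by
    have : 0 ≤ r ^ 3 := by apply pow_nonneg; linarith
    nlinarith [mul_nonneg (by linarith : 0 ≤ r - a) (by linarith : 0 ≤ u),
      mul_nonneg (sq_nonneg r) (by linarith : 0 ≤ a),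
      mul_nonneg (by linarith : 0 ≤ r) (by linarith : 0 ≤ a),
      mul_nonneg (by linarith : 0 ≤ r) (by linarith : 0 ≤ u)]
  have key : ∀ b : ℝ, 0 ≤ b → b ≤ a → r = a ^ 2 + b ^ 2 →
      2 * (b * (r ^ 2 + 4 * r * a - 2 * r - 2 * u - 1)) ≤
      r ^ 3 + r ^ 2 * a + 4 * r * u + 3 * r + 2 * r * a - 2 * a * u - a := by
    intro b h0 h1 h2
    have f1 : 0 ≤ (4 * r - 2 * a + 4 * b) * (u - 1) := by
      apply mul_nonneg <;> linarith
    have f2 : 0 ≤ r * (r - 2 * a * b) := by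
      apply mul_nonneg <;> nlinarith
    have f3 : 0 ≤ r ^ 3 + r ^ 2 * (a - 2 * b) + 7 * r + 2 * r * a - 3 * a + 4 * b * r + 6 * b
        - 4 * r ^ 2 := by
      have g1 : 0 ≤ r ^ 2 * (a - b) := by
        apply mul_nonneg <;> nlinarith
      have g2 : 2 * b ^ 2 ≤ r := by nlinarith
      have g4 : 0 ≤ (r - 2) ^ 2 + 2 * a + 4 * b - r * b := by
        rcases le_total r 6 with h6 | h6
        · nlinarith [mul_nonneg h0 (by linarith : 0 ≤ 6 - r), sq_nonneg (r - 2)]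
        · have g3 : b ≤ r / 4 + 1 / 2 := by nlinarith [sq_nonneg (b - 1)]
          nlinarith [mul_nonneg (by linarith : 0 ≤ r) (by linarith : 0 ≤ r / 4 + 1 / 2 - b)]
      nlinarith [mul_nonneg (by linarith : 0 ≤ r) g4]
    nlinarith
  have key2 : ∀ b : ℝ, 0 ≤ b → 0 ≤ b * (r ^ 2 + 4 * r * a - 2 * r - 2 * u - 1) := by
    intro b h0
    apply mul_nonneg h0
    nlinarith
  have main : |b| * (r ^ 2 + 4 * r * a - 2 * r - 2 * u - 1) * 2 ≤
      r ^ 3 + r ^ 2 * a + 4 * r * u + 3 * r + 2 * r * a - 2 * a * u - a := by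
    have := key |b| (abs_nonneg b) hb (by rw [sq_abs]; exact hr)
    linarith
  have main2 := key2 |b| (abs_nonneg b)
  have eR : ((⟨a, b⟩ : ℂ) ^ 3 + (⟨a, b⟩ : ℂ) ^ 2 + 3 * (⟨a, b⟩ : ℂ) - 1).re
      * ((⟨a, b⟩ : ℂ) ^ 3 + (⟨a, b⟩ : ℂ)).re
      + ((⟨a, b⟩ : ℂ) ^ 3 + (⟨a, b⟩ : ℂ) ^ 2 + 3 * (⟨a, b⟩ : ℂ) - 1).im
      * ((⟨a, b⟩ : ℂ) ^ 3 + (⟨a, b⟩ : ℂ)).im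
      = r ^ 3 + r ^ 2 * a + 4 * r * u + 3 * r + 2 * r * a - 2 * a * u - a := by
    subst hr hu'
    simp [pow_succ]
    ring
  have eI : ((⟨a, b⟩ : ℂ) ^ 3 + (⟨a, b⟩ : ℂ) ^ 2 + 3 * (⟨a, b⟩ : ℂ) - 1).im
      * ((⟨a, b⟩ : ℂ) ^ 3 + (⟨a, b⟩ : ℂ)).re
      - ((⟨a, b⟩ : ℂ) ^ 3 + (⟨a, b⟩ : ℂ) ^ 2 + 3 * (⟨a, b⟩ : ℂ) - 1).re
      * ((⟨a, b⟩ : ℂ) ^ 3 + (⟨a, b⟩ : ℂ)).im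
      = - (b * (r ^ 2 + 4 * r * a - 2 * r - 2 * u - 1)) := by
    subst hr hu'
    simp [pow_succ]
    ring
  apply inCone_div
  · rw [eR]; exact pos
  · rw [eR, eI]
    rcases abs_cases b with ⟨h, _⟩ | ⟨h, _⟩ <;> rw [h] at main main2 <;> linarith
  · rw [eR, eI]
    rcases abs_cases b with ⟨h, _⟩ | ⟨h, _⟩ <;> rw [h] at main main2 <;> linarith

lemma inCone_mul (m : ℝ) (hm : 0 < m) (x y : ℂ) (hx : InCone (3/2) x) (hy : InCone (1/2) y) :
    InCone 8 ((m : ℂ) * x * y) := by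
  obtain ⟨a, b⟩ := x
  obtain ⟨c, d⟩ := y
  obtain ⟨h1, h2⟩ := hx
  obtain ⟨h3, h4⟩ := hy
  simp only at h1 h2 h3 h4
  have hac : 0 < a * c := mul_pos h1 h3
  have k1 : |b * d| ≤ 3/4 * (a * c) := by
    rw [abs_mul]
    calc |b| * |d| ≤ (3/2 * a) * (1/2 * c) := by gcongr
      _ = _ := by ring
  have k2 : |b * c| ≤ 3/2 * (a * c) := by
    rw [abs_mul, abs_of_pos h3]
    nlinarith
  have k3 : |a * d| ≤ 1/2 * (a * c) := by
    rw [abs_mul, abs_of_pos h1]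
    nlinarith
  rw [abs_le] at k1 k2 k3
  rw [mul_assoc]
  refine ⟨?_, ?_⟩
  · rw [Complex.re_ofReal_mul]
    apply mul_pos hm
    simp
    linarith
  · rw [Complex.re_ofReal_mul, Complex.im_ofReal_mul, abs_mul, abs_of_pos hm]
    have : |((⟨a, b⟩ : ℂ) * ⟨c, d⟩).im| ≤ 8 * ((⟨a, b⟩ : ℂ) * ⟨c, d⟩).re := by
      simp
      rw [abs_le]
      constructor <;> linarith
    nlinarith

lemma inCone_add (K : ℝ) (x y : ℂ) (hx : InCone K x) (hy : InCone K y) : InCone K (x + y) := by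
  refine ⟨?_, ?_⟩
  · rw [Complex.add_re]; exact add_pos hx.1 hy.1
  · rw [Complex.add_re, Complex.add_im]
    have := abs_add_le x.im y.im
    linarith [hx.2, hy.2]

lemma inCone_arg (K : ℝ) (w : ℂ) (hw : InCone K w) : |w.arg| ≤ Real.arctan K := by
  obtain ⟨h1, h2⟩ := hw
  have h := Complex.abs_arg_lt_pi_div_two_iff.mpr (Or.inl h1)
  rw [abs_lt] at h
  have e : w.arg = Real.arctan (w.im / w.re) := by
    rw [← Complex.tan_arg, Real.arctan_tan h.1 h.2]
  rw [abs_le] at h2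
  rw [e, abs_le, ← Real.arctan_neg]
  constructor
  · apply Real.arctan_mono
    rw [le_div_iff₀ h1]; linarith
  · apply Real.arctan_mono
    rw [div_le_iff₀ h1]; linarith

lemma omega_spec (μ ρ : ℝ) (hμ : 0 < μ) (hρ : 0 < ρ) (z : ℂ) (hz : 0 ≤ z.re) :
    1 ≤ (omegaSym μ ρ z).re ∧ 1 ≤ (omegaSym μ ρ z).re ^ 2 - (omegaSym μ ρ z).im ^ 2 := by
  have hre : 1 ≤ (1 + (ρ : ℂ) * z / (μ : ℂ)).re := by
    rw [Complex.add_re, Complex.div_ofReal_re, Complex.re_ofReal_mul]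
    have : 0 ≤ ρ * z.re / μ := by positivity
    simpa using this
  have hne : (1 + (ρ : ℂ) * z / (μ : ℂ)) ≠ 0 := by
    intro h
    rw [h] at hre
    simp at hre
    linarith
  have hsq : omegaSym μ ρ z ^ 2 = 1 + (ρ : ℂ) * z / (μ : ℂ) := by
    unfold omegaSym
    rw [← Complex.cpow_nat_mul]
    norm_num
  have h0 : 0 ≤ (omegaSym μ ρ z).re := by
    unfold omegaSym
    rw [Complex.cpow_def_of_ne_zero hne, Complex.exp_re]
    apply mul_nonneg (Real.exp_pos _).le
    apply Real.cos_nonneg_of_mem_Icc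
    have e : (Complex.log (1 + (ρ : ℂ) * z / (μ : ℂ)) * (1 / 2)).im
        = (1 + (ρ : ℂ) * z / (μ : ℂ)).arg / 2 := by
      have : (1 / 2 : ℂ) = ((1 / 2 : ℝ) : ℂ) := by push_cast; rfl
      rw [this, Complex.im_mul_ofReal, Complex.log_im]; ring
    rw [e]
    constructor
    · linarith [Complex.neg_pi_lt_arg (1 + (ρ : ℂ) * z / (μ : ℂ))]
    · linarith [Complex.arg_le_pi (1 + (ρ : ℂ) * z / (μ : ℂ))]
  have h2 : 1 ≤ (omegaSym μ ρ z).re ^ 2 - (omegaSym μ ρ z).im ^ 2 := by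
    rw [← hsq, pow_two, Complex.mul_re] at hre
    linarith
  exact ⟨by nlinarith [sq_nonneg (omegaSym μ ρ z).im], h2⟩

open Real in
/-- `ψ` maps the closed right half-plane into a closed sector
`{w : w ≠ 0, |arg w| ≤ φ}` with `φ < π/2`. -/
theorem psi_into_sector (μ₁ μ₂ ρ₁ ρ₂ : ℝ)
    (hμ₁ : 0 < μ₁) (hμ₂ : 0 < μ₂) (hρ₁ : 0 < ρ₁) (hρ₂ : 0 < ρ₂) :
    ∃ φ : ℝ, 0 ≤ φ ∧ φ < π/2 ∧
      ∀ z : ℂ, 0 ≤ z.re →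
        psiSym μ₁ μ₂ ρ₁ ρ₂ z ≠ 0 ∧ |(psiSym μ₁ μ₂ ρ₁ ρ₂ z).arg| ≤ φ := by
  refine ⟨Real.arctan 8, Real.arctan_nonneg.mpr (by norm_num), Real.arctan_lt_pi_div_two _, ?_⟩
  intro z hz
  obtain ⟨a1, u1⟩ := omega_spec μ₁ ρ₁ hμ₁ hρ₁ z hz
  obtain ⟨a2, u2⟩ := omega_spec μ₂ ρ₂ hμ₂ hρ₂ z hz
  have h : InCone 8 (psiSym μ₁ μ₂ ρ₁ ρ₂ z) := by
    unfold psiSym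
    apply inCone_add
    · exact inCone_mul μ₂ hμ₂ _ _ (inCone_A _ a1 u1) (inCone_B _ a2 u2)
    · exact inCone_mul μ₁ hμ₁ _ _ (inCone_A _ a2 u2) (inCone_B _ a1 u1)
  refine ⟨?_, inCone_arg 8 _ h⟩
  intro h0
  have := h.1
  rw [h0] at this
  simp at this
end

section
/- Let μ₁, μ₂, ρ₁, ρ₂ > 0. Then r₂ᵃ(z) ≠ 0 for every z ∈ ℂ with Re z ≥ 0. -/
open Complex

/-- The reduced Lopatinskii determinant `r₂ᵃ` arising from the symbol of `S_λ^{11}`. -/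
noncomputable def r2aSym (μ₁ μ₂ ρ₁ ρ₂ : ℝ) (z : ℂ) : ℂ :=
  (((ρ₂ : ℂ)/(ρ₁ : ℂ)) * omegaSym μ₁ ρ₁ z + ((ρ₁ : ℂ)/(ρ₂ : ℂ)) * omegaSym μ₂ ρ₂ z) *
      (omegaSym μ₁ ρ₁ z + 1) * (omegaSym μ₂ ρ₂ z + 1)
  + 2 * (omegaSym μ₁ ρ₁ z - 1) * (omegaSym μ₂ ρ₂ z - 1)
  + 2 * (((μ₂ : ℂ) * (ρ₁ : ℂ))/((μ₁ : ℂ) * (ρ₂ : ℂ))) * (omegaSym μ₂ ρ₂ z - 1)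
  + 2 * (((μ₁ : ℂ) * (ρ₂ : ℂ))/((μ₂ : ℂ) * (ρ₁ : ℂ))) * (omegaSym μ₁ ρ₁ z - 1)
  + (((μ₂ : ℂ) * (ρ₁ : ℂ))/((μ₁ : ℂ) * (ρ₂ : ℂ))) *
      ((omegaSym μ₂ ρ₂ z ^ 2 + 1) * (omegaSym μ₂ ρ₂ z + 1))
  + (((μ₁ : ℂ) * (ρ₂ : ℂ))/((μ₂ : ℂ) * (ρ₁ : ℂ))) *
      ((omegaSym μ₁ ρ₁ z ^ 2 + 1) * (omegaSym μ₁ ρ₁ z + 1))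

lemma r2a_aux_sq (μ ρ : ℝ) (z : ℂ) : omegaSym μ ρ z ^ 2 = 1 + (ρ : ℂ) * z / (μ : ℂ) := by
  unfold omegaSym
  rw [one_div]
  exact_mod_cast Complex.cpow_nat_inv_pow (1 + (ρ : ℂ) * z / (μ : ℂ)) (n := 2) two_ne_zero

lemma r2a_aux_re (μ ρ : ℝ) (z : ℂ) : 0 ≤ (omegaSym μ ρ z).re := by
  unfold omegaSym
  by_cases h : 1 + (ρ : ℂ) * z / (μ : ℂ) = 0
  · rw [h, Complex.zero_cpow (by norm_num)]; simp
  · rw [Complex.cpow_def_of_ne_zero h, Complex.exp_re]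
    apply mul_nonneg (Real.exp_pos _).le
    have him : (Complex.log (1 + (ρ : ℂ) * z / (μ : ℂ)) * (1 / 2)).im
        = Complex.arg (1 + (ρ : ℂ) * z / (μ : ℂ)) / 2 := by
      have : (1 / 2 : ℂ) = ((1 / 2 : ℝ) : ℂ) := by push_cast; rfl
      rw [this, Complex.im_mul_ofReal, Complex.log_im]; ring
    rw [him]
    have h1 := Complex.neg_pi_lt_arg (1 + (ρ : ℂ) * z / (μ : ℂ))
    have h2 := Complex.arg_le_pi (1 + (ρ : ℂ) * z / (μ : ℂ))
    exact Real.cos_nonneg_of_mem_Icc ⟨by linarith, by linarith⟩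

/-- Real and imaginary part of `ω`. -/
lemma r2a_aux_props (μ ρ : ℝ) (hμ : 0 < μ) (hρ : 0 < ρ) (z : ℂ) (hz : 0 ≤ z.re) :
    1 ≤ (omegaSym μ ρ z).re ∧
    1 ≤ (omegaSym μ ρ z).re ^ 2 - (omegaSym μ ρ z).im ^ 2 ∧
    2 * (omegaSym μ ρ z).re * (omegaSym μ ρ z).im = ρ / μ * z.im := by
  have hsq := r2a_aux_sq μ ρ z
  have h0 := r2a_aux_re μ ρ z
  have e : (ρ : ℂ) * z / (μ : ℂ) = ((ρ / μ : ℝ) : ℂ) * z := by push_cast; ring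
  rw [e] at hsq
  have hr := congrArg Complex.re hsq
  have hi := congrArg Complex.im hsq
  simp only [pow_two, Complex.mul_re, Complex.mul_im, Complex.add_re, Complex.add_im,
    Complex.one_re, Complex.one_im, Complex.ofReal_re, Complex.ofReal_im] at hr hi
  have hc : 0 ≤ ρ / μ * z.re := by positivity
  refine ⟨?_, ?_, ?_⟩
  · nlinarith [sq_nonneg (omegaSym μ ρ z).im]
  · nlinarith
  · linarith

/-- The abstract polynomial in `ω₁, ω₂`. -/
noncomputable def r2aPoly (A B C D : ℝ) (u v : ℂ) : ℂ :=
  ((A : ℂ) * u + (B : ℂ) * v) * (u + 1) * (v + 1) + 2 * (u - 1) * (v - 1)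
  + 2 * (C : ℂ) * (v - 1) + 2 * (D : ℂ) * (u - 1)
  + (C : ℂ) * ((v ^ 2 + 1) * (v + 1)) + (D : ℂ) * ((u ^ 2 + 1) * (u + 1))

lemma r2a_aux_cubic (u : ℂ) (h : 1 ≤ u.re) (hi : 0 < u.im) (hq : 1 ≤ u.re ^ 2 - u.im ^ 2) :
    0 ≤ ((u ^ 2 + 1) * (u + 1)).im := by
  obtain ⟨a, b⟩ := u
  simp only [pow_two, Complex.mul_re, Complex.mul_im, Complex.add_re, Complex.add_im,
    Complex.one_re, Complex.one_im] at *
  have h1 : 0 ≤ (a * a - b * b + 1) * b := mul_nonneg (by linarith) hi.le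
  have h2 : 0 ≤ a * b * (a + 1) := by positivity
  linarith

lemma r2a_aux_triple (u v : ℂ) (h : 1 ≤ u.re) (hi : 0 < u.im) (hq : 1 ≤ u.re ^ 2 - u.im ^ 2)
    (h' : 1 ≤ v.re) (hi' : 0 < v.im) (hq' : 1 ≤ v.re ^ 2 - v.im ^ 2) :
    0 < (u * (u + 1) * (v + 1)).im := by
  obtain ⟨a, b⟩ := u
  obtain ⟨c, d⟩ := v
  simp only [pow_two, Complex.mul_re, Complex.mul_im, Complex.add_re, Complex.add_im,
    Complex.one_re, Complex.one_im] at *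
  have h1 : 0 < (a * a - b * b + a) * d := mul_pos (by linarith) hi'
  have h2 : 0 < (2 * (a * b) + b) * (c + 1) := by positivity
  linarith

lemma r2a_aux_pos (A B C D : ℝ) (hA : 0 < A) (hB : 0 < B) (hC : 0 < C) (hD : 0 < D) (u v : ℂ)
    (h : 1 ≤ u.re) (hi : 0 < u.im) (hq : 1 ≤ u.re ^ 2 - u.im ^ 2)
    (h' : 1 ≤ v.re) (hi' : 0 < v.im) (hq' : 1 ≤ v.re ^ 2 - v.im ^ 2) :
    r2aPoly A B C D u v ≠ 0 := by
  have e : r2aPoly A B C D u v = (A : ℂ) * (u * (u + 1) * (v + 1)) +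
      (B : ℂ) * (v * (v + 1) * (u + 1)) + ((2 : ℝ) : ℂ) * ((u - 1) * (v - 1))
      + ((2 * C : ℝ) : ℂ) * (v - 1) + ((2 * D : ℝ) : ℂ) * (u - 1)
      + (C : ℂ) * ((v ^ 2 + 1) * (v + 1)) + (D : ℂ) * ((u ^ 2 + 1) * (u + 1)) := by
    unfold r2aPoly; push_cast; ring
  have t1 := mul_pos hA (r2a_aux_triple u v h hi hq h' hi' hq')
  have t2 := mul_pos hB (r2a_aux_triple v u h' hi' hq' h hi hq)
  have t3 := mul_nonneg hC.le (r2a_aux_cubic v h' hi' hq')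
  have t4 := mul_nonneg hD.le (r2a_aux_cubic u h hi hq)
  have t5 : 0 ≤ ((u - 1) * (v - 1)).im := by
    simp only [Complex.mul_im, Complex.sub_re, Complex.sub_im, Complex.one_re, Complex.one_im]
    have := mul_nonneg (sub_nonneg.2 h) hi'.le
    have := mul_nonneg (sub_nonneg.2 h') hi.le
    linarith
  have t6 := mul_pos hC hi'
  have t7 := mul_pos hD hi
  intro h0
  have := congrArg Complex.im (e.symm.trans h0)
  simp only [Complex.add_im, Complex.im_ofReal_mul, Complex.zero_im] at this
  have s1 : (v - 1).im = v.im := by simp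
  have s2 : (u - 1).im = u.im := by simp
  rw [s1, s2] at this
  linarith

lemma r2a_aux_conj (A B C D : ℝ) (u v : ℂ) :
    r2aPoly A B C D ((starRingEnd ℂ) u) ((starRingEnd ℂ) v)
      = (starRingEnd ℂ) (r2aPoly A B C D u v) := by
  have h2 : (starRingEnd ℂ) 2 = 2 := Complex.conj_ofNat 2
  simp [r2aPoly, h2]

lemma r2a_aux_real (A B C D : ℝ) (hA : 0 < A) (hB : 0 < B) (hC : 0 < C) (hD : 0 < D) (u v : ℂ)
    (h : 1 ≤ u.re) (hi : u.im = 0) (h' : 1 ≤ v.re) (hi' : v.im = 0) :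
    r2aPoly A B C D u v ≠ 0 := by
  obtain ⟨a, rfl⟩ : ∃ a : ℝ, u = a := ⟨u.re, Complex.ext (by simp) (by simp [hi])⟩
  obtain ⟨c, rfl⟩ : ∃ c : ℝ, v = c := ⟨v.re, Complex.ext (by simp) (by simp [hi'])⟩
  simp only [Complex.ofReal_re] at h h'
  unfold r2aPoly
  norm_cast
  have ha : 0 ≤ a - 1 := by linarith
  have hc : 0 ≤ c - 1 := by linarith
  have ha' : 0 < a := by linarith
  have hc' : 0 < c := by linarith
  apply ne_of_gt
  positivity

/-- `r₂ᵃ(z) ≠ 0` for `Re z ≥ 0`. -/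
theorem r2a_ne_zero (μ₁ μ₂ ρ₁ ρ₂ : ℝ)
    (hμ₁ : 0 < μ₁) (hμ₂ : 0 < μ₂) (hρ₁ : 0 < ρ₁) (hρ₂ : 0 < ρ₂) :
    ∀ z : ℂ, 0 ≤ z.re → r2aSym μ₁ μ₂ ρ₁ ρ₂ z ≠ 0 := by
  intro z hz
  obtain ⟨p1, p2, p3⟩ := r2a_aux_props μ₁ ρ₁ hμ₁ hρ₁ z hz
  obtain ⟨q1, q2, q3⟩ := r2a_aux_props μ₂ ρ₂ hμ₂ hρ₂ z hz
  have e : r2aSym μ₁ μ₂ ρ₁ ρ₂ z = r2aPoly (ρ₂ / ρ₁) (ρ₁ / ρ₂) ((μ₂ * ρ₁) / (μ₁ * ρ₂))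
      ((μ₁ * ρ₂) / (μ₂ * ρ₁)) (omegaSym μ₁ ρ₁ z) (omegaSym μ₂ ρ₂ z) := by
    unfold r2aSym r2aPoly; push_cast; rfl
  rw [e]
  have hA : 0 < ρ₂ / ρ₁ := by positivity
  have hB : 0 < ρ₁ / ρ₂ := by positivity
  have hC : 0 < (μ₂ * ρ₁) / (μ₁ * ρ₂) := by positivity
  have hD : 0 < (μ₁ * ρ₂) / (μ₂ * ρ₁) := by positivity
  have k1 : 0 < ρ₁ / μ₁ := by positivity
  have k2 : 0 < ρ₂ / μ₂ := by positivity
  generalize omegaSym μ₁ ρ₁ z = u at *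
  generalize omegaSym μ₂ ρ₂ z = v at *
  have hu : 0 < 2 * u.re := by linarith
  have hv : 0 < 2 * v.re := by linarith
  rcases lt_trichotomy z.im 0 with hi | hi | hi
  · have i1 : u.im < 0 := by
      have := mul_neg_of_pos_of_neg k1 hi
      rw [← p3] at this
      exact (pos_iff_neg_of_mul_neg this).1 hu
    have i2 : v.im < 0 := by
      have := mul_neg_of_pos_of_neg k2 hi
      rw [← q3] at this
      exact (pos_iff_neg_of_mul_neg this).1 hv
    intro h0
    refine r2a_aux_pos _ _ _ _ hA hB hC hD ((starRingEnd ℂ) u) ((starRingEnd ℂ) v)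
      (by simpa using p1) (by simpa using i1) (by simpa using p2)
      (by simpa using q1) (by simpa using i2) (by simpa using q2) ?_
    rw [r2a_aux_conj, h0, map_zero]
  · rw [hi, mul_zero] at p3 q3
    exact r2a_aux_real _ _ _ _ hA hB hC hD u v p1
      ((mul_eq_zero.1 p3).resolve_left hu.ne') q1 ((mul_eq_zero.1 q3).resolve_left hv.ne')
  · have i1 : 0 < u.im := by
      have := mul_pos k1 hi
      rw [← p3] at this
      exact (pos_iff_pos_of_mul_pos this).1 hu
    have i2 : 0 < v.im := by
      have := mul_pos k2 hi
      rw [← q3] at this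
      exact (pos_iff_pos_of_mul_pos this).1 hv
    exact r2a_aux_pos _ _ _ _ hA hB hC hD u v p1 i1 p2 q1 i2 q2
end
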